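/- Converse bound R_{Z_Σ} ≥ K/B − 1: in the cyclic hierarchical secure aggregation model with a source key and server security: B · H(Z_Σ) ≥ (K − B) · L. -/

import Mathlib

/-!
Write `H` for entropy and `Y_S` for the relay messages `(Y_i)_{i ∈ S}`.

* The messages outside `B_k` do not involve user `k`, so they are a function of the inputs and keys
  of the other users. Since all relay messages together reveal `∑ W`, adding `Y_{B_k}` to those
  inputs and keys reveals `W_k`; hence `H(Y) - H(Y_{B_kᶜ}) ≥ L` (`hh_relay_gap`).
* Each relay lies in exactly `K - B` of the sets `B_kᶜ`, so the Shearer-type inequality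
  `(K - B) H(Y) ≤ ∑_k H(Y_{B_kᶜ})` holds by submodularity (`sum_submodular_ge`). Together with the
  previous point this gives `B · H(Y) ≥ K L`.
* Server security says that `Y` carries at most `L` units of information about `W`, while `Y` is a
  function of `W` and `Z_Σ`; hence `H(Z_Σ) ≥ H(Y) - L`.

Entropies are handled as expected surprisals, in natural units, so that zero conditional entropy
becomes pointwise functional dependence on the support of `p` (`Det`). The only analytic input is
Gibbs' inequality (`hh_gibbs`), which gives both submodularity and the bound `H ≤ log |α|`.
-/

open scoped BigOperators

noncomputable def pr {Ω : Type} [Fintype Ω] {α : Type} [DecidableEq α]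
    (p : Ω → ℝ) (X : Ω → α) (a : α) : ℝ :=
  ∑ ω, if X ω = a then p ω else 0

noncomputable def ent {Ω : Type} [Fintype Ω] {α : Type} [Fintype α] [DecidableEq α]
    (q : ℕ) (p : Ω → ℝ) (X : Ω → α) : ℝ :=
  -∑ a, pr p X a * Real.logb q (pr p X a)

noncomputable def condEnt {Ω : Type} [Fintype Ω] {α β : Type}
    [Fintype α] [DecidableEq α] [Fintype β] [DecidableEq β]
    (q : ℕ) (p : Ω → ℝ) (X : Ω → α) (Y : Ω → β) : ℝ :=
  ent q p (fun ω => (X ω, Y ω)) - ent q p Y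

noncomputable def mutInfo {Ω : Type} [Fintype Ω] {α β : Type}
    [Fintype α] [DecidableEq α] [Fintype β] [DecidableEq β]
    (q : ℕ) (p : Ω → ℝ) (X : Ω → α) (Y : Ω → β) : ℝ :=
  ent q p X + ent q p Y - ent q p (fun ω => (X ω, Y ω))

noncomputable def condMutInfo {Ω : Type} [Fintype Ω] {α β γ : Type}
    [Fintype α] [DecidableEq α] [Fintype β] [DecidableEq β] [Fintype γ] [DecidableEq γ]
    (q : ℕ) (p : Ω → ℝ) (X : Ω → α) (Y : Ω → β) (Z : Ω → γ) : ℝ :=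
  condEnt q p X Z + condEnt q p Y Z - condEnt q p (fun ω => (X ω, Y ω)) Z

def IsPMF {Ω : Type} [Fintype Ω] (p : Ω → ℝ) : Prop :=
  (∀ ω, 0 ≤ p ω) ∧ ∑ ω, p ω = 1

def IndepRV {Ω : Type} [Fintype Ω] {α β : Type} [DecidableEq α] [DecidableEq β]
    (p : Ω → ℝ) (X : Ω → α) (Y : Ω → β) : Prop :=
  ∀ a b, pr p (fun ω => (X ω, Y ω)) (a, b) = pr p X a * pr p Y b

/-- The set of `B` relays `{k, k+1, …, k+B−1}` (indices mod `K`) associated with user `k`. -/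
def Bset (K B : ℕ) (k : Fin K) : Finset (Fin K) :=
  (Finset.range B).image fun j => ⟨((k : ℕ) + j) % K, Nat.mod_lt _ k.pos⟩

/-- The set of users associated with relay `i`. -/
def Uset (K B : ℕ) (i : Fin K) : Finset (Fin K) :=
  Finset.univ.filter fun k => i ∈ Bset K B k

/-! ### Entropy as expected surprisal -/

/-- The probability of the level set of `X` through `ω`, that is `P(X = X(ω))`. -/
noncomputable def mass {Ω : Type} [Fintype Ω] {α : Type} (p : Ω → ℝ) (X : Ω → α) (ω : Ω) : ℝ :=
  open Classical in ∑ ω', if X ω' = X ω then p ω' else 0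

/-- Entropy in natural units, as the expectation of `-log P(X = X(ω))`; this form makes no use of
the alphabet of `X`. -/
noncomputable def hh {Ω : Type} [Fintype Ω] {α : Type} (p : Ω → ℝ) (X : Ω → α) : ℝ :=
  ∑ ω, p ω * (-Real.log (mass p X ω))

/-- `Y` is a function of `X` on the support of `p`. -/
def Det {Ω : Type} {α β : Type} (p : Ω → ℝ) (X : Ω → α) (Y : Ω → β) : Prop :=
  ∀ ω ω', 0 < p ω → 0 < p ω' → X ω = X ω' → Y ω = Y ω'

section Entropy

variable {Ω : Type} [Fintype Ω] {p : Ω → ℝ} {α β γ : Type}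

lemma pr_apply_eq_mass [DecidableEq α] (X : Ω → α) (ω : Ω) : pr p X (X ω) = mass p X ω := by
  unfold pr mass
  refine Finset.sum_congr rfl fun ω' _ => ?_
  split_ifs <;> rfl

lemma sum_comp_eq [Fintype α] [DecidableEq α] (X : Ω → α) (g : α → ℝ) :
    ∑ ω, p ω * g (X ω) = ∑ a, pr p X a * g a := by
  simp only [pr, Finset.sum_mul]
  rw [Finset.sum_comm]
  refine Finset.sum_congr rfl fun ω _ => ?_
  simp [ite_mul]

lemma ent_eq [Fintype α] [DecidableEq α] (q : ℕ) (X : Ω → α) :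
    ent q p X = hh p X / Real.log q := by
  have h := sum_comp_eq (p := p) X (fun a => -Real.log (pr p X a))
  simp only [pr_apply_eq_mass] at h
  rw [hh, h, ent, Finset.sum_div, ← Finset.sum_neg_distrib]
  refine Finset.sum_congr rfl fun a _ => ?_
  rw [Real.logb]
  ring

lemma pr_nonneg [DecidableEq α] (hp : IsPMF p) (X : Ω → α) (a : α) : 0 ≤ pr p X a :=
  Finset.sum_nonneg fun ω _ => by split_ifs <;> simp [hp.1 ω]

lemma mass_pos (hp : IsPMF p) (X : Ω → α) {ω : Ω} (h : 0 < p ω) : 0 < mass p X ω := by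
  classical
  unfold mass
  refine h.trans_le ?_
  have := Finset.single_le_sum (f := fun ω' => if X ω' = X ω then p ω' else 0) (s := Finset.univ)
    (fun ω' _ => by split_ifs <;> simp [hp.1 ω']) (Finset.mem_univ ω)
  simpa using this

lemma sum_pr [Fintype α] [DecidableEq α] (hp : IsPMF p) (X : Ω → α) : ∑ a, pr p X a = 1 := by
  have h := sum_comp_eq (p := p) X (fun _ => 1)
  simp only [mul_one] at h
  rw [← h, hp.2]

lemma mass_le_of_det (hp : IsPMF p) {X : Ω → α} {Y : Ω → β} (h : Det p X Y) {ω : Ω}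
    (hω : 0 < p ω) : mass p X ω ≤ mass p Y ω := by
  classical
  unfold mass
  refine Finset.sum_le_sum fun ω' _ => ?_
  rcases (hp.1 ω').eq_or_lt with h0 | h0
  · simp [← h0]
  · by_cases hX : X ω' = X ω
    · simp [hX, h ω' ω h0 hω hX]
    · rw [if_neg hX]
      split_ifs <;> simp [h0.le]

/-- Data processing. -/
lemma hh_le_of_det (hp : IsPMF p) {X : Ω → α} {Y : Ω → β} (h : Det p X Y) :
    hh p Y ≤ hh p X := by
  refine Finset.sum_le_sum fun ω _ => ?_
  rcases (hp.1 ω).eq_or_lt with h0 | h0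
  · simp [← h0]
  · have := Real.log_le_log (mass_pos hp X h0) (mass_le_of_det hp h h0)
    exact mul_le_mul_of_nonneg_left (by linarith) h0.le

/-- If `H(Y, X) = H(X)` then `Y` is a function of `X` on the support of `p`. -/
lemma det_of_hh_eq (hp : IsPMF p) {X : Ω → α} {Y : Ω → β}
    (h : hh p (fun ω => (Y ω, X ω)) = hh p X) : Det p X Y := by
  classical
  have hD : Det p (fun ω => (Y ω, X ω)) X := fun ω ω' _ _ e => (Prod.ext_iff.1 e).2
  have key : ∀ ω, 0 < p ω → mass p (fun ω => (Y ω, X ω)) ω = mass p X ω := by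
    intro ω hω
    -- The surprisals compare termwise, so equality of expectations forces termwise equality.
    have := (Finset.sum_eq_sum_iff_of_le (s := Finset.univ)
      (f := fun ω => p ω * (-Real.log (mass p X ω)))
      (g := fun ω => p ω * (-Real.log (mass p (fun ω => (Y ω, X ω)) ω))) (by
        intro ω _
        rcases (hp.1 ω).eq_or_lt with h0 | h0
        · simp [← h0]
        · have := Real.log_le_log (mass_pos hp _ h0) (mass_le_of_det hp hD h0)
          exact mul_le_mul_of_nonneg_left (by linarith) h0.le)).1 h.symm ω (Finset.mem_univ _)
    have := mul_left_cancel₀ hω.ne' this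
    exact Real.log_injOn_pos (mass_pos hp _ hω) (mass_pos hp _ hω) (by linarith)
  intro ω ω' hω hω' hX
  by_contra hne
  have hk := key ω hω
  unfold mass at hk
  -- The point `ω'` contributes to `P(X = X ω)` but not to `P((Y, X) = (Y ω, X ω))`.
  refine (Finset.sum_lt_sum (s := Finset.univ) (fun ω₁ _ => ?_)
    ⟨ω', Finset.mem_univ _, ?_⟩).ne hk
  · by_cases h1 : X ω₁ = X ω
    · simp only [Prod.mk.injEq, h1, and_true, if_true]
      split_ifs <;> simp [hp.1 ω₁]
    · simp [h1]
  · have : ¬ Y ω' = Y ω := fun e => hne e.symm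
    simp [hX.symm, this, hω']

/-- Gibbs' inequality against a subprobability `r`. -/
lemma hh_gibbs [Fintype α] [DecidableEq α] (hp : IsPMF p) (X : Ω → α) (r : α → ℝ)
    (hr : ∀ a, 0 ≤ r a) (hr1 : ∑ a, r a ≤ 1) (hpos : ∀ ω, 0 < p ω → 0 < r (X ω)) :
    hh p X ≤ ∑ ω, p ω * (-Real.log (r (X ω))) := by
  have h1 : ∀ ω, p ω * (-Real.log (mass p X ω)) ≤
      p ω * (-Real.log (r (X ω))) + (p ω * (r (X ω) / pr p X (X ω)) - p ω) := by
    intro ω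
    rcases (hp.1 ω).eq_or_lt with h0 | h0
    · simp [← h0]
    · have hm := mass_pos hp X h0
      have hrr := hpos ω h0
      have := Real.log_le_sub_one_of_pos (div_pos hrr hm)
      rw [Real.log_div hrr.ne' hm.ne'] at this
      rw [pr_apply_eq_mass]
      nlinarith
  have h2 := Finset.sum_le_sum fun ω (_ : ω ∈ Finset.univ) => h1 ω
  rw [Finset.sum_add_distrib, Finset.sum_sub_distrib, hp.2,
    sum_comp_eq X (fun a => r a / pr p X a)] at h2
  have h3 : ∑ a, pr p X a * (r a / pr p X a) ≤ ∑ a, r a := by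
    refine Finset.sum_le_sum fun a _ => ?_
    rcases eq_or_ne (pr p X a) 0 with h | h
    · simp [h, hr a]
    · rw [mul_div_cancel₀ _ h]
  unfold hh
  linarith

lemma hh_le_log_card [Fintype α] (hp : IsPMF p) (X : Ω → α) :
    hh p X ≤ Real.log (Fintype.card α) := by
  classical
  have hne : Nonempty Ω := by
    by_contra h
    rw [not_nonempty_iff] at h
    have := hp.2
    simp at this
  have : Nonempty α := hne.map X
  have hc : (0 : ℝ) < Fintype.card α := by exact_mod_cast Fintype.card_pos
  have h := hh_gibbs hp X (fun _ => 1 / (Fintype.card α : ℝ)) (fun _ => by positivity)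
    (by simp [hc.ne']) (fun _ _ => by positivity)
  simpa [← Finset.sum_mul, hp.2] using h

lemma sum_pr_pair [Fintype α] [DecidableEq α] [DecidableEq β] (X : Ω → α) (Y : Ω → β) (b : β) :
    ∑ a, pr p (fun ω => (X ω, Y ω)) (a, b) = pr p Y b := by
  unfold pr
  rw [Finset.sum_comm]
  refine Finset.sum_congr rfl fun ω _ => ?_
  by_cases h : Y ω = b <;> simp [h]

/-- Submodularity: `H(X,Y,Z) + H(Z) ≤ H(X,Z) + H(Y,Z)`. -/
lemma hh_submod [Fintype α] [Fintype β] [Fintype γ] (hp : IsPMF p)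
    (X : Ω → α) (Y : Ω → β) (Z : Ω → γ) :
    hh p (fun ω => (X ω, Y ω, Z ω)) + hh p Z ≤
      hh p (fun ω => (X ω, Z ω)) + hh p (fun ω => (Y ω, Z ω)) := by
  classical
  -- Compare with the law under which `X` and `Y` are conditionally independent given `Z`.
  have h := hh_gibbs hp (fun ω => (X ω, Y ω, Z ω))
    (fun t => pr p (fun ω => (X ω, Z ω)) (t.1, t.2.2) *
      pr p (fun ω => (Y ω, Z ω)) (t.2.1, t.2.2) / pr p Z t.2.2)
    (fun t => div_nonneg (mul_nonneg (pr_nonneg hp _ _) (pr_nonneg hp _ _)) (pr_nonneg hp _ _))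
    (by
      rw [Fintype.sum_prod_type]
      simp only [Fintype.sum_prod_type]
      calc ∑ x, ∑ y, ∑ z, pr p (fun ω => (X ω, Z ω)) (x, z) *
              pr p (fun ω => (Y ω, Z ω)) (y, z) / pr p Z z
          = ∑ z, (∑ x, pr p (fun ω => (X ω, Z ω)) (x, z)) *
              (∑ y, pr p (fun ω => (Y ω, Z ω)) (y, z)) / pr p Z z := by
            simp only [Finset.sum_mul_sum, Finset.sum_div]
            rw [Finset.sum_comm' (t' := Finset.univ) (s' := fun _ => Finset.univ) (by simp)]
            rw [Finset.sum_comm]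
            simp only [Finset.sum_comm (s := (Finset.univ : Finset γ))]
        _ = ∑ z, pr p Z z := by
            refine Finset.sum_congr rfl fun z _ => ?_
            rw [sum_pr_pair, sum_pr_pair]
            rcases eq_or_ne (pr p Z z) 0 with h | h
            · simp [h]
            · field_simp
        _ ≤ 1 := (sum_pr hp Z).le)
    (fun ω hω => by
      have h1 := mass_pos hp (fun ω => (X ω, Z ω)) hω
      have h2 := mass_pos hp (fun ω => (Y ω, Z ω)) hω
      have h3 := mass_pos hp Z hω
      rw [← pr_apply_eq_mass] at h1 h2 h3
      exact div_pos (mul_pos h1 h2) h3)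
  refine (add_le_add_left h _).trans (le_of_eq ?_)
  unfold hh
  rw [← Finset.sum_add_distrib, ← Finset.sum_add_distrib]
  refine Finset.sum_congr rfl fun ω _ => ?_
  rcases (hp.1 ω).eq_or_lt with h0 | h0
  · simp [← h0]
  · have h1 := mass_pos hp (fun ω => (X ω, Z ω)) h0
    have h2 := mass_pos hp (fun ω => (Y ω, Z ω)) h0
    have h3 := mass_pos hp Z h0
    have e1 := pr_apply_eq_mass (p := p) (fun ω => (X ω, Z ω)) ω
    have e2 := pr_apply_eq_mass (p := p) (fun ω => (Y ω, Z ω)) ω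
    have e3 := pr_apply_eq_mass (p := p) Z ω
    simp only [e1, e2, e3]
    rw [Real.log_div (mul_pos h1 h2).ne' h3.ne', Real.log_mul h1.ne' h2.ne']
    ring

lemma hh_const (hp : IsPMF p) (X : Ω → α) (h : ∀ ω ω', X ω = X ω') : hh p X = 0 := by
  refine Finset.sum_eq_zero fun ω _ => ?_
  have : mass p X ω = 1 := by
    unfold mass
    rw [← hp.2]
    exact Finset.sum_congr rfl fun ω' _ => if_pos (h ω' ω)
  simp [this]

lemma hh_pair_le [Fintype α] [Fintype β] (hp : IsPMF p) (X : Ω → α) (Y : Ω → β) :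
    hh p (fun ω => (X ω, Y ω)) ≤ hh p X + hh p Y := by
  have h := hh_submod hp X Y (fun _ => ())
  rw [hh_const hp (fun _ : Ω => ()) (fun _ _ => rfl)] at h
  have h1 : hh p (fun ω => (X ω, Y ω)) ≤ hh p (fun ω => (X ω, Y ω, ())) :=
    hh_le_of_det hp fun ω ω' _ _ e => by simp_all
  have h2 : hh p (fun ω => (X ω, ())) ≤ hh p X := hh_le_of_det hp fun ω ω' _ _ e => by simp_all
  have h3 : hh p (fun ω => (Y ω, ())) ≤ hh p Y := hh_le_of_det hp fun ω ω' _ _ e => by simp_all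
  linarith

lemma hh_indep [DecidableEq α] [DecidableEq β] (hp : IsPMF p) {X : Ω → α} {Y : Ω → β}
    (h : IndepRV p X Y) : hh p (fun ω => (X ω, Y ω)) = hh p X + hh p Y := by
  unfold hh
  rw [← Finset.sum_add_distrib]
  refine Finset.sum_congr rfl fun ω _ => ?_
  rcases (hp.1 ω).eq_or_lt with h0 | h0
  · simp [← h0]
  · have e := h (X ω) (Y ω)
    rw [pr_apply_eq_mass, pr_apply_eq_mass, pr_apply_eq_mass] at e
    rw [e, Real.log_mul (mass_pos hp X h0).ne' (mass_pos hp Y h0).ne']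
    ring

lemma det_of_condEnt [Fintype α] [DecidableEq α] [Fintype β] [DecidableEq β] (hp : IsPMF p)
    {q : ℕ} (hq : 0 < Real.log q) {X : Ω → α} {Y : Ω → β} (h : condEnt q p Y X = 0) :
    Det p X Y := by
  refine det_of_hh_eq hp ?_
  rw [condEnt, ent_eq, ent_eq, ← sub_div, div_eq_zero_iff] at h
  rcases h with h | h
  · linarith
  · exact absurd h hq.ne'

/-- Entropy of subfamilies is submodular as a set function. -/
lemma hh_family_submod {ι υ : Type} [DecidableEq ι] [Fintype υ] (hp : IsPMF p)
    (Y : ι → Ω → υ) (S T : Finset ι) :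
    hh p (fun ω (i : {i // i ∈ S ∪ T}) => Y i.1 ω) +
      hh p (fun ω (i : {i // i ∈ S ∩ T}) => Y i.1 ω) ≤
    hh p (fun ω (i : {i // i ∈ S}) => Y i.1 ω) + hh p (fun ω (i : {i // i ∈ T}) => Y i.1 ω) := by
  have h := hh_submod hp (fun ω (i : {i // i ∈ S}) => Y i.1 ω)
    (fun ω (i : {i // i ∈ T}) => Y i.1 ω) (fun ω (i : {i // i ∈ S ∩ T}) => Y i.1 ω)
  refine le_trans (add_le_add_left (hh_le_of_det hp ?_) _) (h.trans (add_le_add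
    (hh_le_of_det hp ?_) (hh_le_of_det hp ?_)))
  · intro ω ω' _ _ e
    simp only [Prod.mk.injEq] at e
    funext i
    rcases Finset.mem_union.1 i.2 with hi | hi
    · exact congrFun e.1 ⟨i.1, hi⟩
    · exact congrFun e.2.1 ⟨i.1, hi⟩
  · intro ω ω' _ _ e
    refine Prod.ext e (funext fun i => congrFun e ⟨i.1, (Finset.mem_inter.1 i.2).1⟩)
  · intro ω ω' _ _ e
    refine Prod.ext e (funext fun i => congrFun e ⟨i.1, (Finset.mem_inter.1 i.2).2⟩)

end Entropy

/-! ### A Shearer-type inequality for exact covers -/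

/-- For submodular `f`, the value `f S` is at least the sum over `i ∈ S` of the increments of `f`
along the chain of initial segments. -/
lemma submodular_ge_increments {K : ℕ} (f : Finset (Fin K) → ℝ) (h0 : f ∅ = 0)
    (hf : ∀ S T, f (S ∪ T) + f (S ∩ T) ≤ f S + f T) (S : Finset (Fin K)) :
    ∑ i ∈ S, (f (Finset.univ.filter fun j : Fin K => (j : ℕ) < i + 1) -
      f (Finset.univ.filter fun j : Fin K => (j : ℕ) < i)) ≤ f S := by
  set d : Fin K → ℝ := fun i => f (Finset.univ.filter fun j : Fin K => (j : ℕ) < i + 1) -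
      f (Finset.univ.filter fun j : Fin K => (j : ℕ) < i) with hd
  induction S using Finset.induction_on_max with
  | empty => simp [h0]
  | insert a S ha ih =>
    have hna : a ∉ S := fun h => lt_irrefl _ (ha a h)
    rw [Finset.sum_insert hna]
    have h := hf (insert a S) (Finset.univ.filter fun j : Fin K => (j : ℕ) < a)
    have e1 : insert a S ∪ (Finset.univ.filter fun j : Fin K => (j : ℕ) < a) =
        Finset.univ.filter fun j : Fin K => (j : ℕ) < a + 1 := by
      ext j
      simp only [Finset.mem_union, Finset.mem_insert, Finset.mem_filter, Finset.mem_univ, true_and]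
      constructor
      · rintro ((rfl | h) | h)
        · omega
        · have := Fin.lt_def.1 (ha j h); omega
        · omega
      · intro h
        by_cases hj : (j : ℕ) < a
        · exact Or.inr hj
        · exact Or.inl (Or.inl (Fin.ext (by omega)))
    have e2 : insert a S ∩ (Finset.univ.filter fun j : Fin K => (j : ℕ) < a) = S := by
      ext j
      simp only [Finset.mem_inter, Finset.mem_insert, Finset.mem_filter, Finset.mem_univ, true_and]
      constructor
      · rintro ⟨rfl | h, h'⟩
        · omega
        · exact h
      · exact fun h => ⟨Or.inr h, ha j h⟩
    rw [e1, e2] at h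
    have : d a = f (Finset.univ.filter fun j : Fin K => (j : ℕ) < a + 1) -
      f (Finset.univ.filter fun j : Fin K => (j : ℕ) < a) := rfl
    linarith

/-- Shearer's inequality for a submodular set function and sets covering each point exactly `m`
times. Exactness of the cover makes monotonicity of `f` unnecessary. -/
lemma sum_submodular_ge {K : ℕ} (f : Finset (Fin K) → ℝ) (h0 : f ∅ = 0)
    (hf : ∀ S T, f (S ∪ T) + f (S ∩ T) ≤ f S + f T) (C : Fin K → Finset (Fin K)) (m : ℝ)
    (hC : ∀ i, ((Finset.univ.filter fun k => i ∈ C k).card : ℝ) = m) :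
    m * f Finset.univ ≤ ∑ k, f (C k) := by
  set g : ℕ → ℝ := fun n => f (Finset.univ.filter fun j : Fin K => (j : ℕ) < n) with hg
  have h1 : ∑ i : Fin K, (g (i + 1) - g i) = f Finset.univ := by
    rw [Fin.sum_univ_eq_sum_range (fun n => g (n + 1) - g n) K, Finset.sum_range_sub]
    simp [hg, h0]
  calc m * f Finset.univ = ∑ i : Fin K, m * (g (i + 1) - g i) := by
        rw [← h1, Finset.mul_sum]
    _ = ∑ i : Fin K, ∑ k, if i ∈ C k then g (i + 1) - g i else 0 := by
        refine Finset.sum_congr rfl fun i _ => ?_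
        rw [← Finset.sum_filter, Finset.sum_const, nsmul_eq_mul, hC]
    _ = ∑ k, ∑ i ∈ C k, (g (i + 1) - g i) := by
        rw [Finset.sum_comm]
        refine Finset.sum_congr rfl fun k _ => ?_
        rw [← Finset.sum_filter]
        simp
    _ ≤ ∑ k, f (C k) := Finset.sum_le_sum fun k _ => submodular_ge_increments f h0 hf (C k)

/-! ### The cyclic association -/

lemma card_Uset {K B : ℕ} (hBK : B ≤ K) (i : Fin K) : (Uset K B i).card = B := by
  have hmod : ∀ a, a < 2 * K → a % K = if a < K then a else a - K := by
    intro a ha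
    split_ifs with h
    · exact Nat.mod_eq_of_lt h
    · rw [Nat.mod_eq_sub_mod (by omega), Nat.mod_eq_of_lt (by omega)]
  have hi := i.2
  have hU : Uset K B i = (Finset.range B).image
      fun j => (⟨((i : ℕ) + (K - j)) % K, Nat.mod_lt _ i.pos⟩ : Fin K) := by
    ext k
    have hk := k.2
    simp only [Uset, Bset, Finset.mem_filter, Finset.mem_univ, true_and, Finset.mem_image,
      Finset.mem_range, Fin.ext_iff]
    refine exists_congr fun j => and_congr_right fun hj => ?_
    rcases Nat.eq_zero_or_pos j with rfl | hj0
    · rw [hmod _ (by omega)]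
      simp only [Nat.sub_zero, Nat.add_mod_right, Nat.mod_eq_of_lt hi, add_zero, hk, if_true]
      exact eq_comm
    · rw [hmod _ (by omega), hmod _ (by omega)]
      split_ifs <;> omega
  rw [hU, Finset.card_image_of_injOn, Finset.card_range]
  intro j hj j' hj' e
  simp only [Finset.coe_range, Set.mem_Iio] at hj hj'
  simp only [Fin.mk.injEq] at e
  have hm : ∀ j, j < B → ((i : ℕ) + (K - j)) % K = if j ≤ i then i - j else i + (K - j) := by
    intro j hj
    by_cases h : j ≤ i
    · rw [if_pos h, show (i : ℕ) + (K - j) = (i - j) + K by omega, Nat.add_mod_right,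
        Nat.mod_eq_of_lt (by omega)]
    · rw [if_neg h, Nat.mod_eq_of_lt (by omega)]
  rw [hm j hj, hm j' hj'] at e
  split_ifs at e <;> omega

/-! ### The contribution of one user -/

/-- Given the inputs and keys of the other users, `W_k` still has entropy at least `L` (in
units of `log |F|`). -/
lemma hh_input_given_others {K L : ℕ} {F : Type} [Fintype F] [DecidableEq F]
    {Ω : Type} [Fintype Ω] {p : Ω → ℝ} (hp : IsPMF p) {ζ : Type} [Fintype ζ] [DecidableEq ζ]
    (W : Fin K → Ω → (Fin L → F)) (Z : Fin K → Ω → ζ)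
    (hWH : hh p (fun ω => fun k => W k ω) = K * L * Real.log (Fintype.card F))
    (hWZ : IndepRV p (fun ω => fun k => W k ω) (fun ω => fun k => Z k ω)) (k : Fin K) :
    hh p (fun ω (j : {j // j ≠ k}) => (W j.1 ω, Z j.1 ω)) + L * Real.log (Fintype.card F) ≤
      hh p (fun ω => (W k ω, fun j : {j // j ≠ k} => (W j.1 ω, Z j.1 ω))) := by
  have h := hh_submod hp (W k) (fun ω => fun j => Z j ω)
    (fun ω (j : {j // j ≠ k}) => (W j.1 ω, Z j.1 ω))
  have h1 : hh p (fun ω => ((fun j => W j ω), fun j => Z j ω)) ≤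
      hh p (fun ω => (W k ω, (fun j => Z j ω), fun j : {j // j ≠ k} => (W j.1 ω, Z j.1 ω))) := by
    refine hh_le_of_det hp fun ω ω' _ _ e => ?_
    simp only [Prod.mk.injEq] at e
    refine Prod.ext (funext fun j => ?_) e.2.1
    by_cases hj : j = k
    · subst hj; exact e.1
    · exact (Prod.ext_iff.1 (congrFun e.2.2 ⟨j, hj⟩)).1
  rw [hh_indep hp hWZ, hWH] at h1
  have h2 : hh p (fun ω => ((fun j => Z j ω), fun j : {j // j ≠ k} => (W j.1 ω, Z j.1 ω))) ≤
      hh p (fun ω => ((fun j => Z j ω), fun j : {j // j ≠ k} => W j.1 ω)) := by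
    refine hh_le_of_det hp fun ω ω' _ _ e => ?_
    simp only [Prod.mk.injEq] at e
    exact Prod.ext e.1 (funext fun j => Prod.ext (congrFun e.2 j) (congrFun e.1 j.1))
  have h3 := hh_pair_le hp (fun ω => fun j => Z j ω) (fun ω (j : {j // j ≠ k}) => W j.1 ω)
  have h4 := hh_le_log_card hp (fun ω (j : {j // j ≠ k}) => W j.1 ω)
  have hc : Fintype.card ({j // j ≠ k} → Fin L → F) = Fintype.card F ^ (L * (K - 1)) := by
    simp [pow_mul, Fintype.card_subtype_compl]
  rw [hc, Nat.cast_pow, Real.log_pow, Nat.cast_mul, Nat.cast_sub (by have := k.2; omega)] at h4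
  push_cast at h4
  nlinarith

/-- The relays of user `k` contribute at least `L` on top of all other relays:
`H(Y) - H(Y_{B_kᶜ}) ≥ L`, in units of `log |F|`. -/
lemma hh_relay_gap {K B L : ℕ} {F : Type} [Field F] [Fintype F] [DecidableEq F]
    {Ω : Type} [Fintype Ω] {p : Ω → ℝ} (hp : IsPMF p)
    {ζ χ υ : Type} [Fintype ζ] [DecidableEq ζ] [Fintype υ]
    (W : Fin K → Ω → (Fin L → F)) (Z : Fin K → Ω → ζ)
    (Xm : Fin K → Fin K → Ω → χ) (Y : Fin K → Ω → υ)
    (hWH : hh p (fun ω => fun k => W k ω) = K * L * Real.log (Fintype.card F))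
    (hWZ : IndepRV p (fun ω => fun k => W k ω) (fun ω => fun k => Z k ω))
    (hX : ∀ k : Fin K, Det p (fun ω => (W k ω, Z k ω))
        (fun ω => fun i : {i // i ∈ Bset K B k} => Xm k i.1 ω))
    (hY : ∀ i : Fin K, Det p (fun ω => fun k : {k // k ∈ Uset K B i} => Xm k.1 i ω) (Y i))
    (hRec : Det p (fun ω => fun i => Y i ω) (fun ω => ∑ k, W k ω)) (k : Fin K) :
    hh p (fun ω (i : {i // i ∈ (Bset K B k)ᶜ}) => Y i.1 ω) + L * Real.log (Fintype.card F) ≤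
      hh p (fun ω => fun i => Y i ω) := by
  have h0 := hh_input_given_others hp W Z hWH hWZ k
  have h := hh_submod hp (fun ω => fun i => Y i ω)
    (fun ω (j : {j // j ≠ k}) => (W j.1 ω, Z j.1 ω))
    (fun ω (i : {i // i ∈ (Bset K B k)ᶜ}) => Y i.1 ω)
  have h1 : hh p (fun ω => ((fun i => Y i ω), fun i : {i // i ∈ (Bset K B k)ᶜ} => Y i.1 ω)) ≤
      hh p (fun ω => fun i => Y i ω) :=
    hh_le_of_det hp fun ω ω' _ _ e => Prod.ext e (funext fun i => congrFun e i.1)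
  have h2 : hh p (fun ω => ((fun j : {j // j ≠ k} => (W j.1 ω, Z j.1 ω)),
        fun i : {i // i ∈ (Bset K B k)ᶜ} => Y i.1 ω)) ≤
      hh p (fun ω (j : {j // j ≠ k}) => (W j.1 ω, Z j.1 ω)) := by
    refine hh_le_of_det hp fun ω ω' hω hω' e => Prod.ext e (funext fun i => ?_)
    refine hY i.1 ω ω' hω hω' (funext fun j => ?_)
    have hj : i.1 ∈ Bset K B j.1 := (Finset.mem_filter.1 j.2).2
    have hjk : j.1 ≠ k := fun hjk => Finset.mem_compl.1 i.2 (by rwa [hjk] at hj)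
    exact congrFun (hX j.1 ω ω' hω hω' (congrFun e ⟨j.1, hjk⟩)) ⟨i.1, hj⟩
  have h3 : hh p (fun ω => (W k ω, fun j : {j // j ≠ k} => (W j.1 ω, Z j.1 ω))) ≤
      hh p (fun ω => ((fun i => Y i ω), (fun j : {j // j ≠ k} => (W j.1 ω, Z j.1 ω)),
        fun i : {i // i ∈ (Bset K B k)ᶜ} => Y i.1 ω)) := by
    refine hh_le_of_det hp fun ω ω' hω hω' e => ?_
    simp only [Prod.mk.injEq] at e
    refine Prod.ext ?_ e.2.1
    have hs : ∑ j, W j ω = ∑ j, W j ω' := hRec ω ω' hω hω' e.1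
    have hr : ∀ j ∈ Finset.univ.erase k, W j ω = W j ω' := fun j hj =>
      (Prod.ext_iff.1 (congrFun e.2.1 ⟨j, Finset.ne_of_mem_erase hj⟩)).1
    rw [← Finset.add_sum_erase _ _ (Finset.mem_univ k),
      ← Finset.add_sum_erase _ _ (Finset.mem_univ k),
      Finset.sum_congr rfl hr] at hs
    exact add_right_cancel hs
  linarith

/-! ### Source key entropy under server security -/

/-- converse bound `R_{Z_Σ} ≥ K/B − 1` under server security:
`B · H(Z_Σ) ≥ (K − B) · L`. -/
theorem hsa_RZsigma_ge_K_div_B_sub_one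
    {K B L : ℕ} (hK : 2 ≤ K) (hB1 : 1 ≤ B) (hBK : B ≤ K) (hL : 1 ≤ L)
    {F : Type} [Field F] [Fintype F] [DecidableEq F]
    {Ω : Type} [Fintype Ω] (p : Ω → ℝ) (hp : IsPMF p)
    {ζ χ υ : Type} [Fintype ζ] [DecidableEq ζ] [Fintype χ] [DecidableEq χ]
    [Fintype υ] [DecidableEq υ]
    (W : Fin K → Ω → (Fin L → F)) (Z : Fin K → Ω → ζ)
    (Xm : Fin K → Fin K → Ω → χ) (Y : Fin K → Ω → υ)
    -- the inputs are i.i.d. uniform on 𝔽_q^L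
    (hW : ∀ w : Fin K → Fin L → F,
      pr p (fun ω => fun k => W k ω) w = 1 / (Fintype.card F : ℝ) ^ (K * L))
    -- the inputs are independent of the keys
    (hWZ : IndepRV p (fun ω => fun k => W k ω) (fun ω => fun k => Z k ω))
    -- user messages are functions of the user's input and key
    (hX : ∀ k : Fin K,
      condEnt (Fintype.card F) p
        (fun ω => fun i : {i // i ∈ Bset K B k} => Xm k i.1 ω)
        (fun ω => (W k ω, Z k ω)) = 0)
    -- relay messages are functions of the received messages
    (hY : ∀ i : Fin K,
      condEnt (Fintype.card F) p (Y i)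
        (fun ω => fun k : {k // k ∈ Uset K B i} => Xm k.1 i ω) = 0)
    -- the server recovers the sum of the inputs
    (hRec : condEnt (Fintype.card F) p
      (fun ω => ∑ k, W k ω) (fun ω => fun i => Y i ω) = 0)
    {σ : Type} [Fintype σ] [DecidableEq σ]
    (Zsig : Ω → σ)
    -- all individual keys are generated from the source key
    (hZsig : condEnt (Fintype.card F) p (fun ω => fun k => Z k ω) Zsig = 0)
    -- server security
    (hServerSec : condMutInfo (Fintype.card F) p
      (fun ω => fun i => Y i ω) (fun ω => fun k => W k ω) (fun ω => ∑ k, W k ω) = 0) :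
    (B : ℝ) * ent (Fintype.card F) p Zsig ≥ ((K : ℝ) - (B : ℝ)) * L := by
  have hq : 0 < Real.log (Fintype.card F : ℕ) :=
    Real.log_pos (by exact_mod_cast Fintype.one_lt_card)
  set ℓ := Real.log (Fintype.card F : ℕ) with hℓ
  have hWH : hh p (fun ω => fun k => W k ω) = K * L * ℓ := by
    unfold hh
    simp only [← pr_apply_eq_mass, hW]
    rw [← Finset.sum_mul, hp.2, one_div, Real.log_inv, Real.log_pow]
    push_cast
    ring
  have dX := fun k => det_of_condEnt hp hq (hX k)
  have dY := fun i => det_of_condEnt hp hq (hY i)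
  have dR := det_of_condEnt hp hq hRec
  have dZ := det_of_condEnt hp hq hZsig
  have gap := hh_relay_gap hp W Z Xm Y hWH hWZ dX dY dR
  set f : Finset (Fin K) → ℝ := fun S => hh p (fun ω (i : {i // i ∈ S}) => Y i.1 ω) with hf
  have hfu : f Finset.univ = hh p (fun ω => fun i => Y i ω) :=
    le_antisymm
      (hh_le_of_det hp fun ω ω' _ _ e => funext fun i => congrFun e i.1)
      (hh_le_of_det hp fun ω ω' _ _ e => funext fun i => congrFun e ⟨i, Finset.mem_univ i⟩)
  have shearer := sum_submodular_ge f
    (hh_const hp _ fun ω ω' => funext fun i => absurd i.2 (Finset.notMem_empty _))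
    (hh_family_submod hp Y) (fun k => (Bset K B k)ᶜ) ((K : ℝ) - B) (by
      intro i
      have : (Finset.univ.filter fun k => i ∈ (Bset K B k)ᶜ) = (Uset K B i)ᶜ := by
        ext k; simp [Uset]
      rw [this, Finset.card_compl, card_Uset hBK, Fintype.card_fin, Nat.cast_sub hBK])
  have hsum : ∑ k, f ((Bset K B k)ᶜ) ≤ ∑ _k : Fin K, (f Finset.univ - L * ℓ) :=
    Finset.sum_le_sum fun k _ => by
      have := gap k
      rw [hfu]
      linarith
  rw [Finset.sum_const, Finset.card_univ, Fintype.card_fin, nsmul_eq_mul] at hsum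
  have hsec : hh p (fun ω => ((fun i => Y i ω), ∑ k, W k ω)) +
      hh p (fun ω => ((fun k => W k ω), ∑ k, W k ω)) =
      hh p (fun ω => (((fun i => Y i ω), fun k => W k ω), ∑ k, W k ω)) +
      hh p (fun ω => ∑ k, W k ω) := by
    simp only [condMutInfo, condEnt, ent_eq] at hServerSec
    rw [← hℓ] at hServerSec
    field_simp at hServerSec
    linarith
  have a1 : hh p (fun ω => fun i => Y i ω) ≤ hh p (fun ω => ((fun i => Y i ω), ∑ k, W k ω)) :=
    hh_le_of_det hp fun ω ω' _ _ e => (Prod.ext_iff.1 e).1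
  have a2 : hh p (fun ω => fun k => W k ω) ≤ hh p (fun ω => ((fun k => W k ω), ∑ k, W k ω)) :=
    hh_le_of_det hp fun ω ω' _ _ e => (Prod.ext_iff.1 e).1
  have a3 : hh p (fun ω => (((fun i => Y i ω), fun k => W k ω), ∑ k, W k ω)) ≤
      hh p (fun ω => ((fun k => W k ω), Zsig ω)) := by
    refine hh_le_of_det hp fun ω ω' hω hω' e => ?_
    simp only [Prod.mk.injEq] at e
    have hZ := dZ ω ω' hω hω' e.2
    have hS : ∑ k, W k ω = ∑ k, W k ω' := Finset.sum_congr rfl fun k _ => congrFun e.1 k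
    refine Prod.ext (Prod.ext (funext fun i => ?_) e.1) hS
    refine dY i ω ω' hω hω' (funext fun j => ?_)
    exact congrFun (dX j.1 ω ω' hω hω' (Prod.ext (congrFun e.1 j.1) (congrFun hZ j.1)))
      ⟨i, (Finset.mem_filter.1 j.2).2⟩
  have a4 := hh_pair_le hp (fun ω => fun k => W k ω) Zsig
  have a5 : hh p (fun ω => ∑ k, W k ω) ≤ L * ℓ := by
    have := hh_le_log_card hp (fun ω => ∑ k, W k ω)
    simpa using this
  have hZs : f Finset.univ - L * ℓ ≤ hh p Zsig := by
    rw [hfu]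
    linarith
  have hB := mul_le_mul_of_nonneg_left hZs (Nat.cast_nonneg (α := ℝ) B)
  rw [ent_eq, ← hℓ, ge_iff_le, ← mul_div_assoc, le_div_iff₀ hq]
  nlinarith
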